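/- Let Γ be a terminal DG game in which some terminal is reachable from the initial position v₀ by a directed path, and let Q ⊆ V be the set of positions from which no terminal can be reached by a directed path; assume Q ≠ ∅. Then v₀ ∉ Q, the induced subgame Γ[V∖Q] is again a terminal DG game (every non-terminal position of V∖Q retains at least one outgoing move inside V∖Q), and if Γ[V∖Q] has a terminal Nash equilibrium then Γ has a terminal Nash equilibrium. -/

import Mathlib

/-!
Write `X` for the complement of `Q`. The set `Q` is closed under moves and contains no terminal,
so a play entering `Q` has outcome `∞`; and `Γ[X]` and `Γ` have the same terminals. A terminal Nash
equilibrium `σ` of `Γ[X]` is extended to `Γ` by arbitrary moves on `Q`; the play, and hence the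
outcome, does not change. A unilateral deviation `σ'` in `Γ` either leads the play into `Q`, giving
the outcome `∞`, worst for everybody in a terminal game, or keeps the play inside `X`; in the
latter case it produces the same play as a unilateral deviation in `Γ[X]`, namely `σ'` with
the moves into `Q` replaced by those of `σ`, and so it is not profitable
(`outcome_restrict` compares the two outcomes).
-/

open Classical

/-- A deterministic graphical (DG) game on vertex (position) set `V` with player set `ι`.
`adj` is the move relation of the digraph; terminals are exactly the vertices of
out-degree `0`.  `owner x` is the player controlling position `x` (irrelevant for
terminals), `init` is the initial position, and `pref i x y` means that player `i`
strictly prefers outcome `x` to outcome `y`, where outcomes are encoded as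
`Option V`: `some t` for a terminal `t` and `none` for the infinite outcome `∞`. -/
structure DGGame (V : Type*) (ι : Type*) where
  adj : V → V → Prop
  owner : V → ι
  init : V
  pref : ι → Option V → Option V → Prop

namespace DGGame

variable {V ι : Type*} (Γ : DGGame V ι)

/-- A terminal position: no outgoing moves. -/
def Terminal (x : V) : Prop := ∀ y, ¬ Γ.adj x y

/-- The set of outcomes `A = T ∪ {∞}`. -/
def OutcomeSet : Set (Option V) := {x | x = none ∨ ∃ t, Γ.Terminal t ∧ x = some t}

/-- The preferences of each player form a strict linear order on the outcome set. -/
def PrefOrder : Prop :=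
  ∀ i : ι,
    (∀ x ∈ Γ.OutcomeSet, ¬ Γ.pref i x x) ∧
    (∀ x ∈ Γ.OutcomeSet, ∀ y ∈ Γ.OutcomeSet, ∀ z ∈ Γ.OutcomeSet,
        Γ.pref i x y → Γ.pref i y z → Γ.pref i x z) ∧
    (∀ x ∈ Γ.OutcomeSet, ∀ y ∈ Γ.OutcomeSet, x ≠ y → Γ.pref i x y ∨ Γ.pref i y x)

/-- One step of the play determined by a situation `σ` (stays put at terminals). -/
noncomputable def step (σ : V → V) (x : V) : V :=
  if Γ.Terminal x then x else σ x

/-- The position reached after `n` moves of the play starting at the initial position. -/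
noncomputable def iter (σ : V → V) (n : ℕ) : V := (Γ.step σ)^[n] Γ.init

/-- The outcome `g(σ)` of a situation: the terminal at which the play from the initial
position ends, or `none` (i.e. `∞`) if the play is infinite. -/
noncomputable def outcome (σ : V → V) : Option V :=
  if h : ∃ n, Γ.Terminal (Γ.iter σ n) then some (Γ.iter σ (Nat.find h)) else none

/-- A situation: a choice, for every non-terminal position, of a move from it.
(Values at terminal positions are irrelevant.) -/
def IsSituation (σ : V → V) : Prop := ∀ x, ¬ Γ.Terminal x → Γ.adj x (σ x)

/-- Nash equilibrium in pure stationary strategies: no player `i` can obtain a strictly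
better outcome by changing his own moves only. -/
def IsNE (σ : V → V) : Prop :=
  Γ.IsSituation σ ∧
  ∀ (i : ι) (σ' : V → V), Γ.IsSituation σ' →
    (∀ x, Γ.owner x ≠ i → σ' x = σ x) →
    ¬ Γ.pref i (Γ.outcome σ') (Γ.outcome σ)

/-- A terminal Nash equilibrium: a NE whose outcome is a terminal. -/
def IsTerminalNE (σ : V → V) : Prop := Γ.IsNE σ ∧ ∃ t, Γ.outcome σ = some t

/-- A non-terminal Nash equilibrium: a NE whose outcome is `∞`. -/
def IsNonterminalNE (σ : V → V) : Prop := Γ.IsNE σ ∧ Γ.outcome σ = none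

/-- A terminal DG game: every player prefers every terminal outcome to `∞`. -/
def TerminalGame : Prop := ∀ (i : ι) (t : V), Γ.Terminal t → Γ.pref i (some t) none

/-- A play-once DG game: every player controls exactly one position. -/
def PlayOnce : Prop := ∀ i : ι, {x | ¬ Γ.Terminal x ∧ Γ.owner x = i}.ncard = 1

/-- Reachability by a directed path. -/
def Reaches (x y : V) : Prop := Relation.ReflTransGen Γ.adj x y

end DGGame

namespace DGGame

variable {V ι : Type*}

/-- The set `Q` of positions from which no terminal can be reached by a directed path. -/
def noTermReach (Γ : DGGame V ι) : Set V :=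
  {x | ¬ ∃ t, Γ.Terminal t ∧ Γ.Reaches x t}

/-- The subgame `Γ[X]` induced by a set of positions `X` containing the initial
position: same controllers, same preferences, initial position `v₀`, and the
induced subgraph `G[X]`. -/
def restrict (Γ : DGGame V ι) (X : Set V) (h0 : Γ.init ∈ X) : DGGame X ι where
  adj a b := Γ.adj a.1 b.1
  owner a := Γ.owner a.1
  init := ⟨Γ.init, h0⟩
  pref i a b := Γ.pref i (a.map Subtype.val) (b.map Subtype.val)

end DGGame

namespace DGGame

variable {V ι : Type*} (Γ : DGGame V ι)

theorem not_terminal_of_mem {x : V} (hx : x ∈ Γ.noTermReach) : ¬ Γ.Terminal x :=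
  fun ht => hx ⟨x, ht, Relation.ReflTransGen.refl⟩

theorem mem_of_adj {x y : V} (hx : x ∈ Γ.noTermReach) (h : Γ.adj x y) : y ∈ Γ.noTermReach :=
  fun ⟨t, ht, hr⟩ => hx ⟨t, ht, Relation.ReflTransGen.head h hr⟩

theorem exists_move {x : V} (hx : x ∉ Γ.noTermReach) (hn : ¬ Γ.Terminal x) :
    ∃ y, Γ.adj x y ∧ y ∉ Γ.noTermReach := by
  obtain ⟨t, ht, hr⟩ := not_not.mp hx
  rcases Relation.ReflTransGen.cases_head hr with rfl | ⟨y, hxy, hyt⟩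
  · exact absurd ht hn
  · exact ⟨y, hxy, fun h => h ⟨t, ht, hyt⟩⟩

theorem terminal_restrict (h0 : Γ.init ∈ (Γ.noTermReach)ᶜ) (x : ↥(Γ.noTermReach)ᶜ) :
    (Γ.restrict (Γ.noTermReach)ᶜ h0).Terminal x ↔ Γ.Terminal x.1 := by
  constructor
  · intro h
    by_contra hn
    obtain ⟨y, hy, hyQ⟩ := Γ.exists_move x.2 hn
    exact h ⟨y, hyQ⟩ hy
  · exact fun h y => h y.1

theorem iter_succ (σ : V → V) (n : ℕ) : Γ.iter σ (n + 1) = Γ.step σ (Γ.iter σ n) :=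
  Function.iterate_succ_apply' _ _ _

theorem outcome_mem (σ : V → V) : Γ.outcome σ ∈ Γ.OutcomeSet := by
  unfold outcome
  split_ifs with h
  · exact Or.inr ⟨_, Nat.find_spec h, rfl⟩
  · exact Or.inl rfl

/-- A play of `Γ` staying outside `Q` has the same outcome as the play in the subgame of any `τ`
that agrees with `σ` on all moves staying outside `Q`. -/
theorem outcome_restrict (h0 : Γ.init ∈ (Γ.noTermReach)ᶜ) (σ : V → V)
    (τ : ↥(Γ.noTermReach)ᶜ → ↥(Γ.noTermReach)ᶜ)
    (hστ : ∀ x : ↥(Γ.noTermReach)ᶜ, σ x.1 ∉ Γ.noTermReach → (τ x).1 = σ x.1)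
    (hstay : ∀ n, Γ.iter σ n ∉ Γ.noTermReach) :
    Γ.outcome σ = ((Γ.restrict (Γ.noTermReach)ᶜ h0).outcome τ).map Subtype.val := by
  have hiter : ∀ n, ((Γ.restrict (Γ.noTermReach)ᶜ h0).iter τ n).1 = Γ.iter σ n := by
    intro n
    induction n with
    | zero => rfl
    | succ n ih =>
      have hs := hstay (n + 1)
      rw [iter_succ] at hs ⊢
      rw [iter_succ]
      unfold step at hs ⊢
      rw [Γ.terminal_restrict h0, ih]
      split_ifs at hs ⊢ with h
      · exact ih
      · rw [hστ _ (by rwa [ih]), ih]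
  have hT : ∀ n, (Γ.restrict (Γ.noTermReach)ᶜ h0).Terminal
      ((Γ.restrict (Γ.noTermReach)ᶜ h0).iter τ n) ↔ Γ.Terminal (Γ.iter σ n) := by
    intro n
    rw [Γ.terminal_restrict h0, hiter]
  unfold outcome
  simp only [hT]
  split_ifs with h
  · simp [hiter]
  · rfl

/-- A play that visits `Q` is infinite. -/
theorem outcome_eq_none {σ : V → V} (hσ : Γ.IsSituation σ) {n : ℕ}
    (hn : Γ.iter σ n ∈ Γ.noTermReach) : Γ.outcome σ = none := by
  have hafter : ∀ k, Γ.iter σ (n + k) ∈ Γ.noTermReach := by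
    intro k
    induction k with
    | zero => exact hn
    | succ k ih =>
      have hnt := Γ.not_terminal_of_mem ih
      rw [← Nat.add_assoc, iter_succ, step, if_neg hnt]
      exact Γ.mem_of_adj ih (hσ _ hnt)
  have hfix : ∀ m, Γ.Terminal (Γ.iter σ m) → ∀ k, Γ.iter σ (m + k) = Γ.iter σ m := by
    intro m hm k
    induction k with
    | zero => rfl
    | succ k ih => rw [← Nat.add_assoc, iter_succ, ih, step, if_pos hm]
  unfold outcome
  rw [dif_neg]
  rintro ⟨m, hm⟩
  -- At time `n + m` the play is both in `Q` and still at the terminal reached at time `m`.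
  have h := hfix m hm n
  rw [Nat.add_comm] at h
  exact Γ.not_terminal_of_mem (hafter m) (h ▸ hm)

end DGGame

/-- Let `Γ` be a terminal DG game in which some terminal is reachable from the initial
position, and let `Q` be the (nonempty) set of positions from which no terminal can be
reached.  Then `v₀ ∉ Q`, the induced subgame `Γ[V∖Q]` is again a terminal DG game
(every non-terminal position of `V∖Q` keeps at least one outgoing move inside `V∖Q`),
and if `Γ[V∖Q]` has a terminal Nash equilibrium then so does `Γ`. -/
theorem stmt5 {V ι : Type*} [Finite V] (Γ : DGGame V ι)
    (hinit : ¬ Γ.Terminal Γ.init) (hpref : Γ.PrefOrder)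
    (hterm : Γ.TerminalGame)
    (hreach : ∃ t, Γ.Terminal t ∧ Γ.Reaches Γ.init t)
    (hQne : (Γ.noTermReach).Nonempty) :
    Γ.init ∉ Γ.noTermReach ∧
    (∀ x ∉ Γ.noTermReach, ¬ Γ.Terminal x → ∃ y, Γ.adj x y ∧ y ∉ Γ.noTermReach) ∧
    ∀ h0 : Γ.init ∈ (Γ.noTermReach)ᶜ,
      (Γ.restrict (Γ.noTermReach)ᶜ h0).TerminalGame ∧
      ((∃ σ, (Γ.restrict (Γ.noTermReach)ᶜ h0).IsTerminalNE σ) →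
        ∃ σ : V → V, Γ.IsTerminalNE σ) := by
  refine ⟨fun h => h hreach, fun x hx hn => Γ.exists_move hx hn, fun h0 => ⟨?_, ?_⟩⟩
  · intro i t ht
    exact hterm i t.1 ((Γ.terminal_restrict h0 t).mp ht)
  rintro ⟨σ, ⟨hσ, hNE⟩, t, ht⟩
  have hmove : ∀ x, ∃ y, ¬ Γ.Terminal x → Γ.adj x y := by
    intro x
    by_cases hx : Γ.Terminal x
    · exact ⟨x, fun h => absurd hx h⟩
    · obtain ⟨y, hy⟩ := _root_.not_forall_not.mp hx
      exact ⟨y, fun _ => hy⟩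
  choose f hf using hmove
  -- The extension of `σ` by arbitrary moves `f` on `Q`.
  set ρ : V → V := fun x => if h : x ∈ (Γ.noTermReach)ᶜ then (σ ⟨x, h⟩).1 else f x with hρ
  have hρX : ∀ x : ↥(Γ.noTermReach)ᶜ, ρ x.1 = (σ x).1 := fun x => by
    rw [hρ]; exact dif_pos x.2
  have hρsit : Γ.IsSituation ρ := by
    intro x hx
    by_cases hQ : x ∈ (Γ.noTermReach)ᶜ
    · rw [hρX ⟨x, hQ⟩]
      exact hσ ⟨x, hQ⟩ (fun h => hx ((Γ.terminal_restrict h0 _).mp h))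
    · rw [show ρ x = f x from dif_neg hQ]
      exact hf x hx
  have hstay : ∀ n, Γ.iter ρ n ∉ Γ.noTermReach := by
    intro n
    induction n with
    | zero => exact h0
    | succ n ih =>
      rw [DGGame.iter_succ, DGGame.step]
      split_ifs
      · exact ih
      · rw [hρX ⟨_, ih⟩]
        exact (σ _).2
  have hout := Γ.outcome_restrict h0 ρ σ (fun x _ => (hρX x).symm) hstay
  have hout' : Γ.outcome ρ = some t.1 := by rw [hout, ht]; rfl
  refine ⟨ρ, ⟨hρsit, ?_⟩, t.1, hout'⟩
  intro i σ' hσ' hdev hbetter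
  by_cases hvisit : ∃ n, Γ.iter σ' n ∈ Γ.noTermReach
  · obtain ⟨n, hn⟩ := hvisit
    have hmem := Γ.outcome_mem ρ
    rw [Γ.outcome_eq_none hσ' hn, hout'] at hbetter
    rw [hout'] at hmem
    have htT : Γ.Terminal t.1 := by
      rcases hmem with h | ⟨s, hs, h⟩
      · cases h
      · cases h; exact hs
    obtain ⟨hirr, htrans, -⟩ := hpref i
    exact hirr none (Or.inl rfl)
      (htrans _ (Or.inl rfl) _ hmem _ (Or.inl rfl) hbetter (hterm i t.1 htT))
  · rw [not_exists] at hvisit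
    -- The deviation in the subgame: follow `σ'` unless it moves into `Q`.
    let τ : ↥(Γ.noTermReach)ᶜ → ↥(Γ.noTermReach)ᶜ := fun x =>
      if h : σ' x.1 ∈ (Γ.noTermReach)ᶜ then ⟨σ' x.1, h⟩ else σ x
    have hτ : ∀ x : ↥(Γ.noTermReach)ᶜ, σ' x.1 ∉ Γ.noTermReach → (τ x).1 = σ' x.1 := by
      intro x hx
      have : τ x = ⟨σ' x.1, hx⟩ := dif_pos hx
      rw [this]
    have hτ' : ∀ x : ↥(Γ.noTermReach)ᶜ, σ' x.1 ∈ Γ.noTermReach → τ x = σ x :=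
      fun x hx => dif_neg (fun h => h hx)
    refine hNE i τ ?_ ?_ ?_
    · intro x hx
      by_cases hQ : σ' x.1 ∈ Γ.noTermReach
      · rw [hτ' x hQ]
        exact hσ x hx
      · change Γ.adj x.1 (τ x).1
        rw [hτ x hQ]
        exact hσ' x.1 (fun h => hx ((Γ.terminal_restrict h0 x).mpr h))
    · intro x hx
      have h : σ' x.1 = (σ x).1 := (hdev x.1 hx).trans (hρX x)
      apply Subtype.ext
      rw [hτ x (h ▸ (σ x).2), h]
    · change Γ.pref i (Option.map Subtype.val _) (Option.map Subtype.val _)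
      rw [← hout, ← Γ.outcome_restrict h0 σ' τ hτ hvisit]
      exact hbetter
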